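/- Fix integers m ≥ 1 and k ≥ 1. Then the base cases of the recursion for N' hold: N'_{1,k}(α,β) = α^k β ( β^k + α Σ_{ℓ=0}^{k−1} β^ℓ ) (the sum of weights of Condensed Catalan tableaux of shape (1,1,…,1) with k rows, of size (k, k+1)), and N'_{m,1}(α,β) = α β^m ( α^m + β Σ_{i=0}^{m−1} α^i ) (the sum of weights of Condensed Catalan tableaux of shape (m), of size (1, m+1)). Both identities hold in ℤ[α,β]. -/

import Mathlib

open scoped Classical
open Finset

/-- A Condensed Catalan tableau with `k` rows inside a rectangle of width `w`,
of shape `lam`: cells are `none` (empty), `some true` (an α) or `some false` (a β). -/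
def IsCCT (k w : ℕ) (lam : Fin k → ℕ) (F : Fin k → Fin w → Option Bool) : Prop :=
  (∀ (i : Fin k) (c : Fin w), lam i ≤ (c : ℕ) → F i c = none) ∧
  (∀ (i : Fin k) (c c' : Fin w), F i c = some false → c' < c → F i c' = none) ∧
  (∀ (i i' : Fin k) (c : Fin w), F i c = some true → i' < i → F i' c = none) ∧
  (∀ (i : Fin k) (c : Fin w), (c : ℕ) < lam i →
    (∀ i' : Fin k, i < i' → F i' c ≠ some true) →
    (∀ c' : Fin w, c < c' → (c' : ℕ) < lam i → F i c' ≠ some false) →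
    F i c ≠ none)

/-- The number of α's in the filling. -/
def aCount (k w : ℕ) (F : Fin k → Fin w → Option Bool) : ℕ :=
  (Finset.univ.filter fun p : Fin k × Fin w => F p.1 p.2 = some true).card

/-- The number of β's in the filling. -/
def bCount (k w : ℕ) (F : Fin k → Fin w → Option Bool) : ℕ :=
  (Finset.univ.filter fun p : Fin k × Fin w => F p.1 p.2 = some false).card

/-- The binomial coefficient `binom a b` for integer arguments, with the convention
that it vanishes whenever `b < 0` or `b > a`. -/
def icho (a b : ℤ) : ℤ := if 0 ≤ b ∧ b ≤ a then ((a.toNat).choose b.toNat : ℤ) else 0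

/-- `N'_{m,k}(α,β)`: the sum of weights of Condensed Catalan tableaux of size
`(k, k+m)` whose shape has first row exactly `m` and exactly `k` nonzero rows
(stated here for `m, k ≥ 1`), with `α = X 0`, `β = X 1`. -/
noncomputable def N'tab (m k : ℕ) : MvPolynomial (Fin 2) ℤ :=
  ∑ pr ∈ Finset.univ.filter
      (fun pr : (Fin k → Fin (m + 1)) × (Fin k → Fin m → Option Bool) =>
        (∀ i j : Fin k, i ≤ j → (pr.1 j : ℕ) ≤ (pr.1 i : ℕ)) ∧
        (∀ h : 0 < k, (pr.1 ⟨0, h⟩ : ℕ) = m) ∧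
        (∀ i : Fin k, 1 ≤ (pr.1 i : ℕ)) ∧
        IsCCT k m (fun i => (pr.1 i : ℕ)) pr.2),
    (MvPolynomial.X 0 : MvPolynomial (Fin 2) ℤ) ^ (k + aCount k m pr.2) *
      MvPolynomial.X 1 ^ (m + bCount k m pr.2)

/-!
In a tableau of shape `(1, …, 1)` or `(m)` only one of the two letters ever forces other boxes to be
empty: α in a column, β in a row. This letter occurs at most once. If it does not occur, every box
carries the other letter; if it does, the boxes before it are empty and the boxes after it all carry
the other letter. Summing over its position yields the geometric sum.
-/

lemma sum_withBot {ι M : Type*} [Fintype ι] [AddCommMonoid M] (w : WithBot ι → M) :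
    ∑ p, w p = w ⊥ + ∑ i : ι, w i :=
  Fintype.sum_option w

section Strip

variable {ι : Type*}

/-- The filling rules of a Condensed Catalan tableau restricted to a single row or column `ι`, where
`b` is the letter that empties the boxes preceding it: β (`false`) for a row, read eastwards, and
α (`true`) for a column, read southwards. -/
structure IsStripFilling [LT ι] (b : Bool) (f : ι → Option Bool) : Prop where
  eq_none_of_lt : ∀ ⦃i j⦄, f j = some b → i < j → f i = none
  ne_none : ∀ i, (∀ j, i < j → f j ≠ some b) → f i ≠ none

variable [LinearOrder ι] {b : Bool} {f : ι → Option Bool} {p : WithBot ι} {i : ι}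

/-- The strip filling with its unique `b` at `p`, which classifies all strip fillings; `p = ⊥`
encodes that `b` does not occur. -/
def stripFilling (b : Bool) (p : WithBot ι) (i : ι) : Option Bool :=
  if i < p then none else if i = p then some b else some !b

@[simp]
lemma stripFilling_eq_none_iff : stripFilling b p i = none ↔ i < p := by
  unfold stripFilling
  split_ifs <;> simp_all

@[simp]
lemma stripFilling_eq_some_iff : stripFilling b p i = some b ↔ i = p := by
  unfold stripFilling
  split_ifs with hlt heq
  · simp [hlt.ne]
  · simp [heq]
  · simp [heq]

@[simp]
lemma stripFilling_eq_some_not_iff : stripFilling b p i = some !b ↔ p < i := by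
  unfold stripFilling
  split_ifs with hlt heq
  · simp [hlt.le]
  · simp [heq]
  · simpa using lt_of_le_of_ne (not_lt.1 hlt) (Ne.symm heq)

lemma stripFilling_injective (b : Bool) :
    Function.Injective (stripFilling b : WithBot ι → ι → Option Bool) := by
  intro p q hpq
  have h (i : ι) : i = p ↔ i = q := by
    rw [← stripFilling_eq_some_iff (b := b), hpq, stripFilling_eq_some_iff]
  induction p with
  | bot => exact (WithBot.eq_bot_iff_forall_ne.2 fun i hi => WithBot.coe_ne_bot ((h i).2 hi)).symm
  | coe c => exact (h c).1 rfl

lemma isStripFilling_stripFilling (b : Bool) (p : WithBot ι) :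
    IsStripFilling b (stripFilling b p) where
  eq_none_of_lt i j hj hij := by
    rw [stripFilling_eq_some_iff] at hj
    rw [stripFilling_eq_none_iff, ← hj]
    exact WithBot.coe_lt_coe.2 hij
  ne_none i hi := by
    rw [Ne, stripFilling_eq_none_iff]
    intro hip
    obtain ⟨j, rfl⟩ := WithBot.ne_bot_iff_exists.1 hip.ne_bot
    exact hi j (WithBot.coe_lt_coe.1 hip) (stripFilling_eq_some_iff.2 rfl)

namespace IsStripFilling

lemma eq_some_not (hf : IsStripFilling b f) (hi : ∀ j, i ≤ j → f j ≠ some b) :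
    f i = some !b := by
  obtain ⟨a, ha⟩ := Option.ne_none_iff_exists'.1 (hf.ne_none i fun j hij => hi j hij.le)
  have hab : a ≠ b := fun h => hi i le_rfl (h ▸ ha)
  rw [ha, Bool.eq_not_of_ne hab]

lemma ne_some_of_lt (hf : IsStripFilling b f) {j : ι} (hi : f i = some b) (hij : i < j) :
    f j ≠ some b := fun hj => by
  simp [hf.eq_none_of_lt hj hij] at hi

lemma exists_stripFilling_eq (hf : IsStripFilling b f) : ∃ p, stripFilling b p = f := by
  by_cases hb : ∃ c, f c = some b
  · obtain ⟨c, hc⟩ := hb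
    refine ⟨c, funext fun i => ?_⟩
    rcases lt_trichotomy i c with hic | rfl | hci
    · rw [hf.eq_none_of_lt hc hic, stripFilling_eq_none_iff]
      exact WithBot.coe_lt_coe.2 hic
    · rw [hc, stripFilling_eq_some_iff]
    · rw [hf.eq_some_not fun j hij => hf.ne_some_of_lt hc (hci.trans_le hij),
        stripFilling_eq_some_not_iff]
      exact WithBot.coe_lt_coe.2 hci
  · push Not at hb
    refine ⟨⊥, funext fun i => ?_⟩
    rw [hf.eq_some_not fun j _ => hb j, stripFilling_eq_some_not_iff]
    exact WithBot.bot_lt_coe i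

end IsStripFilling

lemma sum_isStripFilling [Fintype ι] {M : Type*} [AddCommMonoid M] (b : Bool)
    (w : (ι → Option Bool) → M) :
    ∑ f with IsStripFilling b f, w f = ∑ p, w (stripFilling b p) := by
  symm
  refine sum_nbij (stripFilling b) (fun p _ => ?_) (stripFilling_injective b).injOn
    (fun f hf => ?_) fun _ _ => rfl
  · exact mem_filter_univ _ |>.2 (isStripFilling_stripFilling b p)
  · simpa using (mem_filter_univ _ |>.1 hf).exists_stripFilling_eq

lemma sum_weight_isStripFilling {R : Type*} [CommSemiring R] (n : ℕ) (b : Bool) (x y : R) :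
    ∑ f : Fin n → Option Bool with IsStripFilling b f,
        x ^ #{i | f i = some b} * y ^ #{i | f i = some !b} =
      y ^ n + x * ∑ l ∈ range n, y ^ l := by
  have sum_pow_card_gt : ∑ c : Fin n, y ^ #{i | c < i} = ∑ l ∈ range n, y ^ l := by
    simp only [filter_lt_eq_Ioi, Fin.card_Ioi]
    rw [Fin.sum_univ_eq_sum_range (fun c => y ^ (n - 1 - c)), sum_range_reflect]
  rw [sum_isStripFilling, ← sum_pow_card_gt, mul_sum]
  simp only [stripFilling_eq_some_iff, stripFilling_eq_some_not_iff]
  simp [sum_withBot, filter_eq']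

end Strip

/-- The shapes of size `(k, k + m)` with first row exactly `m` and exactly `k` nonzero rows, over
which `N'tab m k` ranges. -/
noncomputable def fullShapes (m k : ℕ) : Finset (Fin k → Fin (m + 1)) :=
  {lam | (∀ i j : Fin k, i ≤ j → (lam j : ℕ) ≤ lam i) ∧ (∀ h : 0 < k, (lam ⟨0, h⟩ : ℕ) = m) ∧
    ∀ i, 1 ≤ (lam i : ℕ)}

lemma N'tab_eq_sum_fullShapes (m k : ℕ) :
    N'tab m k = ∑ lam ∈ fullShapes m k, ∑ F with IsCCT k m (fun i => lam i) F,
      MvPolynomial.X 0 ^ (k + aCount k m F) * MvPolynomial.X 1 ^ (m + bCount k m F) := by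
  simp only [N'tab, fullShapes, sum_filter, Fintype.sum_prod_type, ite_and, sum_ite_irrel,
    sum_const_zero]

lemma fullShapes_one_left (k : ℕ) : fullShapes 1 k = {fun _ => 1} := by
  ext lam
  simp only [fullShapes, mem_filter_univ, mem_singleton, funext_iff, Fin.ext_iff]
  refine ⟨fun ⟨_, _, hpos⟩ i => le_antisymm (Nat.lt_succ_iff.1 (lam i).isLt) (hpos i), fun h => ?_⟩
  simp [h]

lemma fullShapes_one_right {m : ℕ} (hm : 1 ≤ m) : fullShapes m 1 = {fun _ => Fin.last m} := by
  ext lam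
  simp only [fullShapes, mem_filter_univ, mem_singleton, funext_iff, Fin.ext_iff]
  refine ⟨fun ⟨_, hfirst, _⟩ i => ?_, fun h => ?_⟩
  · rw [Subsingleton.elim i 0]
    exact hfirst Nat.one_pos
  · simp [h, hm]

lemma isCCT_column_iff {k : ℕ} {lam : Fin k → ℕ} (hlam : ∀ i, 1 ≤ lam i)
    {F : Fin k → Fin 1 → Option Bool} :
    IsCCT k 1 lam F ↔ IsStripFilling true fun i => F i 0 := by
  constructor
  · rintro ⟨_, _, hα, hne⟩
    exact ⟨fun i i' => hα i' i 0,
      fun i hi => hne i 0 (hlam i) hi fun c hc => absurd (Subsingleton.elim 0 c) hc.ne⟩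
  · intro hF
    refine ⟨fun i c hc => ?_, fun i c c' _ hc => ?_, fun i i' c hi hii' => ?_,
      fun i c _ hi _ => ?_⟩
    · exact absurd (hlam i) (by omega)
    · exact absurd (Subsingleton.elim c' c) hc.ne
    · rw [Subsingleton.elim c 0] at hi ⊢
      exact hF.eq_none_of_lt hi hii'
    · rw [Subsingleton.elim c 0] at hi ⊢
      exact hF.ne_none i hi

lemma isCCT_row_iff {m : ℕ} {lam : Fin 1 → ℕ} (hlam : m ≤ lam 0)
    {F : Fin 1 → Fin m → Option Bool} :
    IsCCT 1 m lam F ↔ IsStripFilling false (F 0) := by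
  have lt_lam (c : Fin m) : (c : ℕ) < lam 0 := c.isLt.trans_le hlam
  constructor
  · rintro ⟨_, hβ, _, hne⟩
    exact ⟨fun c c' => hβ 0 c' c, fun c hc => hne 0 c (lt_lam c)
      (fun i hi => absurd (Subsingleton.elim 0 i) hi.ne) fun c' hc' _ => hc c' hc'⟩
  · intro hF
    refine ⟨fun i c hc => ?_, fun i c c' hc hcc' => ?_, fun i i' c _ hi => ?_,
      fun i c _ _ hc => ?_⟩
    · rw [Subsingleton.elim i 0] at hc
      exact absurd (lt_lam c) hc.not_gt
    · rw [Subsingleton.elim i 0] at hc ⊢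
      exact hF.eq_none_of_lt hc hcc'
    · exact absurd (Subsingleton.elim i' i) hi.ne
    · rw [Subsingleton.elim i 0] at hc ⊢
      exact hF.ne_none c fun c' hc' => hc c' hc' (lt_lam c')

lemma N'tab_one_left_eq_sum_isStripFilling (k : ℕ) :
    N'tab 1 k = MvPolynomial.X 0 ^ k * MvPolynomial.X 1 *
      ∑ f : Fin k → Option Bool with IsStripFilling true f,
        MvPolynomial.X 0 ^ #{i | f i = some true} *
          MvPolynomial.X 1 ^ #{i | f i = some false} := by
  rw [N'tab_eq_sum_fullShapes, fullShapes_one_left, sum_singleton, mul_sum]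
  refine sum_equiv (Equiv.piCongrRight fun _ => Equiv.funUnique (Fin 1) (Option Bool))
    (fun F => ?_) fun F _ => ?_
  · simp only [mem_filter_univ]
    exact isCCT_column_iff (by simp)
  · have hcount (b : Bool) :
        #{p : Fin k × Fin 1 | F p.1 p.2 = some b} = #{i | F i 0 = some b} := by
      simp only [card_filter, Fintype.sum_prod_type, Fin.sum_univ_one]
    simp only [aCount, bCount, hcount, pow_add, pow_one]
    exact mul_mul_mul_comm ..

lemma N'tab_one_right_eq_sum_isStripFilling {m : ℕ} (hm : 1 ≤ m) :
    N'tab m 1 = MvPolynomial.X 0 * MvPolynomial.X 1 ^ m *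
      ∑ f : Fin m → Option Bool with IsStripFilling false f,
        MvPolynomial.X 1 ^ #{i | f i = some false} *
          MvPolynomial.X 0 ^ #{i | f i = some true} := by
  rw [N'tab_eq_sum_fullShapes, fullShapes_one_right hm, sum_singleton, mul_sum]
  refine sum_equiv (Equiv.funUnique (Fin 1) (Fin m → Option Bool))
    (fun F => ?_) fun F _ => ?_
  · simp only [mem_filter_univ]
    exact isCCT_row_iff (by simp)
  · have hcount (b : Bool) :
        #{p : Fin 1 × Fin m | F p.1 p.2 = some b} = #{c | F 0 c = some b} := by
      simp only [card_filter, Fintype.sum_prod_type, Fin.sum_univ_one]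
    simp only [aCount, bCount, hcount, pow_add, pow_one]
    exact (mul_mul_mul_comm ..).trans (congr_arg _ (mul_comm ..))

/-- Base cases of the recursion for `N'`:
`N'_{1,k} = α^k β (β^k + α Σ_{ℓ=0}^{k-1} β^ℓ)` (tableaux of shape `(1,…,1)` with `k`
rows) and `N'_{m,1} = α β^m (α^m + β Σ_{i=0}^{m-1} α^i)` (tableaux of shape `(m)`). -/
theorem stmt12 (m k : ℕ) (hm : 1 ≤ m) (hk : 1 ≤ k) :
    N'tab 1 k
        = (MvPolynomial.X 0 : MvPolynomial (Fin 2) ℤ) ^ k * MvPolynomial.X 1 *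
          (MvPolynomial.X 1 ^ k +
            MvPolynomial.X 0 * ∑ l ∈ Finset.range k, MvPolynomial.X 1 ^ l) ∧
    N'tab m 1
        = (MvPolynomial.X 0 : MvPolynomial (Fin 2) ℤ) * MvPolynomial.X 1 ^ m *
          (MvPolynomial.X 0 ^ m +
            MvPolynomial.X 1 * ∑ i ∈ Finset.range m, MvPolynomial.X 0 ^ i) := by
  constructor
  · rw [N'tab_one_left_eq_sum_isStripFilling]
    exact congr_arg _ (sum_weight_isStripFilling k true _ _)
  · rw [N'tab_one_right_eq_sum_isStripFilling hm]
    exact congr_arg _ (sum_weight_isStripFilling m false _ _)
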